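/- For every ε₁ > 0 there exists ε₀ > 0 such that for every ε ∈ (0, ε₀) with S > 16/ε there is a constant γ_d > 0, independent of n, with P(Dⁿ) ≥ 1 − e^{−γ_d n} for all n, where Dⁿ is the event that every optimal alignment v ∈ V of X and Y satisfies N_{1>}(v)/N_1(v) ≥ 1/4 − ε₁/4. -/

import Mathlib

open scoped Classical
open Finset

noncomputable section

/-- Score of aligning two letters (`true` = 1, `false` = 0):
`s(1,1) = S`, `s(0,0) = 1`, `s(1,0) = s(0,1) = 0`. -/
def letterScore (S : ℝ) (a b : Bool) : ℝ :=
  if a = true ∧ b = true then S else if a = false ∧ b = false then 1 else 0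

/-- Score of the alignment `(π, ν)` of the strings `x` and `y`. -/
def alignScore (S : ℝ) {n k : ℕ} (x y : Fin n → Bool) (π ν : Fin k → Fin n) : ℝ :=
  ∑ i : Fin k, letterScore S (x (π i)) (y (ν i))

/-- The optimal alignment score of two binary strings of length `n`. -/
def optScore (S : ℝ) (n : ℕ) (x y : Fin n → Bool) : ℝ :=
  sSup {r : ℝ | ∃ (k : ℕ) (π ν : Fin k → Fin n),
    StrictMono π ∧ StrictMono ν ∧ r = alignScore S x y π ν}

/-- The string `x`, extended by the (neutral) letter `true` outside `[0, n)`. -/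
def ext {n : ℕ} (x : Fin n → Bool) : ℕ → Bool :=
  fun j => if h : j < n then x ⟨j, h⟩ else true

/-- `blockStart x ℓ i` holds iff a block of zeros of length `ℓ` of `x` starts at position `i`:
positions `i, …, i+ℓ-1` carry zeros, and they are delimited by ones (or the ends of `x`). -/
def blockStart {n : ℕ} (x : Fin n → Bool) (ℓ i : ℕ) : Prop :=
  0 < ℓ ∧ i + ℓ ≤ n ∧ (∀ j ∈ Finset.Ico i (i + ℓ), ext x j = false) ∧
    (i = 0 ∨ ext x (i - 1) = true) ∧ ext x (i + ℓ) = true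

/-- The set of starting positions of blocks of zeros of length `ℓ` in `x`. -/
def starts {n : ℕ} (x : Fin n → Bool) (ℓ : ℕ) : Finset ℕ :=
  (Finset.range n).filter fun i => blockStart x ℓ i

/-- The number of blocks of zeros of length `ℓ` in `x`. -/
def numBlocks {n : ℕ} (x : Fin n → Bool) (ℓ : ℕ) : ℕ := (starts x ℓ).card

/-- Probability of an event under a uniform random binary string of length `n`. -/
def probX (n : ℕ) (E : (Fin n → Bool) → Prop) : ℝ :=
  ((Finset.univ.filter E).card : ℝ) / 2 ^ n

/-- Probability of an event under two independent uniform random binary strings of length `n`. -/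
def probXY (n : ℕ) (E : (Fin n → Bool) → (Fin n → Bool) → Prop) : ℝ :=
  ((Finset.univ.filter (fun p : (Fin n → Bool) × (Fin n → Bool) => E p.1 p.2)).card : ℝ) / 4 ^ n

/-- Expectation of a function of a uniform random binary string of length `n`. -/
def expX (n : ℕ) (f : (Fin n → Bool) → ℝ) : ℝ := (∑ x, f x) / 2 ^ n

/-- Expectation of a function of two independent uniform random binary strings of length `n`. -/
def expXY (n : ℕ) (f : (Fin n → Bool) → (Fin n → Bool) → ℝ) : ℝ := (∑ x, ∑ y, f x y) / 4 ^ n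

/-- The string obtained from `x` by removing one zero from the block of zeros starting at `p`
and inserting one extra zero into the block of zeros starting at `q`. -/
def modifyStr {n : ℕ} (x : Fin n → Bool) (p q : ℕ) : Fin n → Bool :=
  fun i => (((List.ofFn x).eraseIdx p).insertIdx (if p < q then q - 1 else q) false).getD i false

/-- The number of ones of a binary string. -/
def numOnes {n : ℕ} (x : Fin n → Bool) : ℕ :=
  (Finset.univ.filter fun i => x i = true).card

/-- `(π, ν)` is an optimal alignment of `x` and `y`. -/
def IsOptimal (S : ℝ) {n k : ℕ} (x y : Fin n → Bool) (π ν : Fin k → Fin n) : Prop :=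
  StrictMono π ∧ StrictMono ν ∧ alignScore S x y π ν = optScore S n x y

/-- Index `i` of the alignment `(π, ν)` aligns a pair of ones of `x` and `y`. -/
def matchedPair {n k : ℕ} (x y : Fin n → Bool) (π ν : Fin k → Fin n) (i : Fin k) : Prop :=
  x (π i) = true ∧ y (ν i) = true

/-- The number of pairs of ones aligned by `(π, ν)`. -/
def numMatched {n k : ℕ} (x y : Fin n → Bool) (π ν : Fin k → Fin n) : ℕ :=
  (Finset.univ.filter (matchedPair x y π ν)).card

/-- The position in `x` of the last one of `x` matched by the alignment `(π, ν)`
(0 if there is none). -/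
def lastMatchedX {n k : ℕ} (x y : Fin n → Bool) (π ν : Fin k → Fin n) : ℕ :=
  (Finset.univ.filter (matchedPair x y π ν)).sup fun i => (π i : ℕ)

/-- The position in `y` of the last one of `y` matched by the alignment `(π, ν)`
(0 if there is none). -/
def lastMatchedY {n k : ℕ} (x y : Fin n → Bool) (π ν : Fin k → Fin n) : ℕ :=
  (Finset.univ.filter (matchedPair x y π ν)).sup fun i => (ν i : ℕ)

/-- The number of ones of `x`, counted up to the last aligned pair of ones, which do not
belong to an aligned pair of ones of `(π, ν)`. -/
def skippedOnesX {n k : ℕ} (x y : Fin n → Bool) (π ν : Fin k → Fin n) : ℕ :=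
  (Finset.univ.filter fun j : Fin n => x j = true ∧ (j : ℕ) ≤ lastMatchedX x y π ν ∧
    ∀ i : Fin k, matchedPair x y π ν i → π i ≠ j).card

/-- The number of ones of `y`, counted up to the last aligned pair of ones, which do not
belong to an aligned pair of ones of `(π, ν)`. -/
def skippedOnesY {n k : ℕ} (x y : Fin n → Bool) (π ν : Fin k → Fin n) : ℕ :=
  (Finset.univ.filter fun j : Fin n => y j = true ∧ (j : ℕ) ≤ lastMatchedY x y π ν ∧
    ∀ i : Fin k, matchedPair x y π ν i → ν i ≠ j).card

/-- The alignment `(π, ν)` (encoded by its skipped-ones tuple `v`) belongs to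
`V = ∪_{k ≥ (1/2 - ε/8)n} Vᵏ`: it aligns at least `(1/2 - ε/8)n` pairs of ones and the total
number of skipped ones is at most `ε/2` times the number of aligned pairs of ones. -/
def inV (ε : ℝ) {n k : ℕ} (x y : Fin n → Bool) (π ν : Fin k → Fin n) : Prop :=
  ((1 : ℝ) / 2 - ε / 8) * n ≤ (numMatched x y π ν : ℝ) ∧
  (skippedOnesX x y π ν + skippedOnesY x y π ν : ℝ) ≤ ε * (numMatched x y π ν : ℝ) / 2

/-- `N₁(v)`: the number of pairs of consecutive matched ones of `x` (with no skipped ones in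
between, in either string) enclosing exactly one zero of `x`, such that only zeros lie
between the corresponding matched ones of `y`. -/
def N1count {n k : ℕ} (x y : Fin n → Bool) (π ν : Fin k → Fin n) : ℕ :=
  ((Finset.univ ×ˢ Finset.univ : Finset (Fin k × Fin k)).filter fun p =>
    p.1 < p.2 ∧ matchedPair x y π ν p.1 ∧ matchedPair x y π ν p.2 ∧
    (π p.2 : ℕ) = (π p.1 : ℕ) + 2 ∧
    (∀ j : Fin n, π p.1 < j → j < π p.2 → x j = false) ∧
    (∀ j : Fin n, ν p.1 < j → j < ν p.2 → y j = false)).card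

/-- `N₁>(v)`: as `N₁(v)`, additionally requiring that the corresponding matched ones of `y`
enclose two or more zeros. -/
def N1gtCount {n k : ℕ} (x y : Fin n → Bool) (π ν : Fin k → Fin n) : ℕ :=
  ((Finset.univ ×ˢ Finset.univ : Finset (Fin k × Fin k)).filter fun p =>
    p.1 < p.2 ∧ matchedPair x y π ν p.1 ∧ matchedPair x y π ν p.2 ∧
    (π p.2 : ℕ) = (π p.1 : ℕ) + 2 ∧
    (∀ j : Fin n, π p.1 < j → j < π p.2 → x j = false) ∧
    (∀ j : Fin n, ν p.1 < j → j < ν p.2 → y j = false) ∧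
    (ν p.1 : ℕ) + 2 < (ν p.2 : ℕ)).card

/-! Flip to zero, in each string, the ones skipped before the last aligned pair of ones. In the new
strings the alignment pairs the `i`-th one of each, so that `N₁` and `N₁>` become, up to the number
of flips, counts over pairs of facing gaps between consecutive ones: no trace of the alignment is
left except the set of flips. Flipping preserves the uniform law, and for `V` the set of flips is
one of at most `exp (o(1) n)` sets as `ε → 0`.

The gaps of two independent uniform strings are dominated by independent geometric variables, and
such a variable is at least two with probability `1/4`. Chernoff's bound therefore makes the ratio
fall below `c < 1/4`, with an error of order `ε n`, only with probability `exp (-δ n)`, where `δ`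
depends on `c` alone, and for small `ε` this beats the union bound over the sets of flips. For the
finitely many `n` where polynomial factors matter, it is enough that the event has positive
probability. -/

/-! ### Uniform random strings -/

lemma expX_mono {n : ℕ} {f g : (Fin n → Bool) → ℝ} (h : ∀ x, f x ≤ g x) : expX n f ≤ expX n g := by
  unfold expX
  gcongr with x
  exact h x

lemma expX_const (n : ℕ) (a : ℝ) : expX n (fun _ => a) = a := by
  simp [expX]

lemma expX_const_mul {n : ℕ} (a : ℝ) (f : (Fin n → Bool) → ℝ) :
    expX n (fun x => a * f x) = a * expX n f := by
  simp only [expX, ← mul_sum, mul_div_assoc]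

lemma expX_succ {n : ℕ} (f : (Fin (n + 1) → Bool) → ℝ) :
    expX (n + 1) f =
      (expX n (fun x => f (Fin.cons true x)) + expX n (fun x => f (Fin.cons false x))) / 2 := by
  have hsum : ∑ x, f x = ∑ x, f (Fin.cons true x) + ∑ x, f (Fin.cons false x) := by
    rw [← (Fin.consEquiv fun _ : Fin (n + 1) => Bool).sum_comp f, Fintype.sum_prod_type]
    simp [Fin.consEquiv]
  rw [expX, hsum, expX, expX, pow_succ]
  ring

lemma expXY_eq_expX_expX {n : ℕ} (f : (Fin n → Bool) → (Fin n → Bool) → ℝ) :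
    expXY n f = expX n fun x => expX n (f x) := by
  simp only [expXY, expX, ← sum_div, div_div, ← mul_pow]
  norm_num

lemma probXY_eq_expXY {n : ℕ} (E : (Fin n → Bool) → (Fin n → Bool) → Prop) :
    probXY n E = expXY n fun x y => if E x y then 1 else 0 := by
  rw [probXY, expXY, ← Fintype.sum_prod_type', sum_boole]

lemma probXY_le_expXY {n : ℕ} {E : (Fin n → Bool) → (Fin n → Bool) → Prop}
    {f : (Fin n → Bool) → (Fin n → Bool) → ℝ} (hf : ∀ x y, 0 ≤ f x y)
    (hE : ∀ x y, E x y → 1 ≤ f x y) : probXY n E ≤ expXY n f := by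
  rw [probXY_eq_expXY, expXY, expXY]
  gcongr with x _ y _
  split_ifs with h
  · exact hE x y h
  · exact hf x y

lemma probXY_mono {n : ℕ} {E F : (Fin n → Bool) → (Fin n → Bool) → Prop}
    (h : ∀ x y, E x y → F x y) : probXY n E ≤ probXY n F := by
  unfold probXY
  gcongr with p _
  exact h p.1 p.2

lemma probXY_not {n : ℕ} (E : (Fin n → Bool) → (Fin n → Bool) → Prop) :
    probXY n (fun x y => ¬ E x y) = 1 - probXY n E := by
  have hcard := card_filter_add_card_filter_not
    (s := (univ : Finset ((Fin n → Bool) × (Fin n → Bool)))) (fun p => E p.1 p.2)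
  have huniv : (univ : Finset ((Fin n → Bool) × (Fin n → Bool))).card = 4 ^ n := by
    simp [← mul_pow]
  rw [huniv] at hcard
  rw [eq_sub_iff_add_eq', probXY, probXY, ← add_div, div_eq_one_iff_eq (by positivity)]
  norm_cast
  convert hcard

lemma probXY_nonneg {n : ℕ} (E : (Fin n → Bool) → (Fin n → Bool) → Prop) : 0 ≤ probXY n E := by
  unfold probXY
  positivity

lemma probXY_pos {n : ℕ} {E : (Fin n → Bool) → (Fin n → Bool) → Prop} {x y : Fin n → Bool}
    (h : E x y) : 0 < probXY n E := by
  have : 0 < (univ.filter fun p : (Fin n → Bool) × (Fin n → Bool) => E p.1 p.2).card :=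
    card_pos.2 ⟨(x, y), by simpa using h⟩
  unfold probXY
  positivity

lemma probXY_exists_le {n : ℕ} {ι : Type*} (s : Finset ι)
    (E : ι → (Fin n → Bool) → (Fin n → Bool) → Prop) :
    probXY n (fun x y => ∃ i ∈ s, E i x y) ≤ ∑ i ∈ s, probXY n (E i) := by
  simp only [probXY, ← sum_div]
  gcongr
  rw [← Nat.cast_sum, Nat.cast_le]
  refine (card_le_card fun p hp => ?_).trans card_biUnion_le
  simpa using hp

/-- The string `x` with the letters at the positions in `A` flipped. -/
def flipOn {α : Type*} (A : Finset α) (x : α → Bool) : α → Bool :=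
  fun j => if j ∈ A then !x j else x j

lemma flipOn_involutive {α : Type*} (A : Finset α) : Function.Involutive (flipOn A) := by
  intro x
  funext j
  by_cases h : j ∈ A <;> simp [flipOn, h]

lemma expX_flipOn {n : ℕ} (A : Finset (Fin n)) (f : (Fin n → Bool) → ℝ) :
    expX n (fun x => f (flipOn A x)) = expX n f :=
  congrArg (· / 2 ^ n) (Equiv.sum_comp (flipOn_involutive A).toPerm f)

lemma probXY_flipOn {n : ℕ} (A B : Finset (Fin n))
    (E : (Fin n → Bool) → (Fin n → Bool) → Prop) :
    probXY n (fun x y => E (flipOn A x) (flipOn B y)) = probXY n E := by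
  simp only [probXY_eq_expXY, expXY_eq_expX_expX]
  calc expX n (fun x => expX n fun y => if E (flipOn A x) (flipOn B y) then (1 : ℝ) else 0)
      = expX n (fun x => expX n fun y => if E (flipOn A x) y then (1 : ℝ) else 0) :=
        congrArg (expX n) (funext fun x => expX_flipOn B fun y => if E (flipOn A x) y then 1 else 0)
    _ = expX n (fun x => expX n fun y => if E x y then (1 : ℝ) else 0) :=
        expX_flipOn A fun x => expX n fun y => if E x y then 1 else 0

lemma card_filter_card_le_exp (α : Type*) [Fintype α] {τ : ℝ} (hτ : 0 ≤ τ) (D : ℝ) :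
    ((univ.filter fun C : Finset α => (C.card : ℝ) ≤ D).card : ℝ) ≤
      Real.exp (τ * D + Fintype.card α * Real.exp (-τ)) := by
  have hbinom : ∑ C : Finset α, Real.exp (-τ) ^ C.card = (Real.exp (-τ) + 1) ^ Fintype.card α := by
    simpa using Fintype.sum_pow_mul_eq_add_pow α (Real.exp (-τ)) 1
  calc ((univ.filter fun C : Finset α => (C.card : ℝ) ≤ D).card : ℝ)
      = ∑ C : Finset α, if (C.card : ℝ) ≤ D then 1 else 0 := (sum_boole _ _).symm
    _ ≤ ∑ C : Finset α, Real.exp (τ * D) * Real.exp (-τ) ^ C.card := by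
        gcongr with C
        rw [← Real.exp_nat_mul, ← Real.exp_add]
        split_ifs with hC
        · exact Real.one_le_exp (by nlinarith)
        · positivity
    _ = Real.exp (τ * D) * (Real.exp (-τ) + 1) ^ Fintype.card α := by rw [← mul_sum, hbinom]
    _ ≤ Real.exp (τ * D) * Real.exp (Real.exp (-τ)) ^ Fintype.card α := by
        gcongr
        exact Real.add_one_le_exp _
    _ = _ := by rw [← Real.exp_nat_mul, ← Real.exp_add]

/-! ### Gaps between the ones of a random string -/

/-- The position of the `i`-th one of `x`, counting from `0`. Since `ext x` continues `x` by ones,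
the value is at least `n` when `x` has at most `i` ones. -/
def onePos {n : ℕ} (x : Fin n → Bool) (i : ℕ) : ℕ := Nat.nth (fun j => ext x j = true) i

/-- The number of zeros of `x` immediately before its `i`-th one, counting the ones from `0`. -/
def gap {n : ℕ} (x : Fin n → Bool) : ℕ → ℕ
  | 0 => onePos x 0
  | i + 1 => onePos x (i + 1) - onePos x i - 1

lemma ext_apply_val {n : ℕ} (x : Fin n → Bool) (j : Fin n) : ext x j = x j := by
  simp [_root_.ext]

lemma infinite_ext_eq_true {n : ℕ} (x : Fin n → Bool) :
    (Set.ofPred fun j => ext x j = true).Infinite :=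
  (Set.Ici_infinite n).mono fun j (hj : n ≤ j) => by
    simp [_root_.ext, hj.not_gt]

lemma ext_cons_zero {n : ℕ} (b : Bool) (x : Fin n → Bool) :
    ext (Fin.cons b x : Fin (n + 1) → Bool) 0 = b := by
  simp [_root_.ext]

lemma ext_cons_succ {n : ℕ} (b : Bool) (x : Fin n → Bool) (j : ℕ) :
    ext (Fin.cons b x : Fin (n + 1) → Bool) (j + 1) = ext x j := by
  by_cases h : j < n
  · simp only [_root_.ext, Nat.add_lt_add_iff_right, h, dif_pos]
    exact Fin.cons_succ (α := fun _ => Bool) b x ⟨j, h⟩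
  · simp [_root_.ext, h]

lemma onePos_cons {n : ℕ} (b : Bool) (x : Fin n → Bool) (i : ℕ) :
    onePos (Fin.cons b x : Fin (n + 1) → Bool) (i + b.toNat) = onePos x i + 1 := by
  set P : ℕ → Prop := fun j => ext (Fin.cons b x : Fin (n + 1) → Bool) j = true with hP
  have hinf := infinite_ext_eq_true x
  have hshift : (fun j => P (j + 1)) = fun j => ext x j = true := by
    simp only [hP, ext_cons_succ]
  have hmem : P (onePos x i + 1) := by
    simp only [hP, ext_cons_succ]
    exact Nat.nth_mem_of_infinite hinf i
  have hcount : Nat.count P (onePos x i + 1) = i + b.toNat := by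
    rw [Nat.count_succ']
    congr 1
    · simp only [hP, ext_cons_succ]
      exact Nat.count_nth_of_infinite hinf i
    · simp only [hP, ext_cons_zero]
      cases b <;> rfl
  rw [← hcount]
  exact Nat.nth_count hmem

lemma onePos_cons_true_zero {n : ℕ} (x : Fin n → Bool) :
    onePos (Fin.cons true x : Fin (n + 1) → Bool) 0 = 0 :=
  Nat.nth_zero_of_zero (ext_cons_zero true x)

lemma gap_cons_true_succ {n : ℕ} (x : Fin n → Bool) (i : ℕ) :
    gap (Fin.cons true x : Fin (n + 1) → Bool) (i + 1) = gap x i := by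
  have h : ∀ i, onePos (Fin.cons true x : Fin (n + 1) → Bool) (i + 1) = onePos x i + 1 :=
    onePos_cons true x
  cases i with
  | zero => simp [gap, h, onePos_cons_true_zero]
  | succ i => simp [gap, h]

lemma gap_cons_false_zero {n : ℕ} (x : Fin n → Bool) :
    gap (Fin.cons false x : Fin (n + 1) → Bool) 0 = gap x 0 + 1 :=
  onePos_cons false x 0

lemma gap_cons_false_succ {n : ℕ} (x : Fin n → Bool) (i : ℕ) :
    gap (Fin.cons false x : Fin (n + 1) → Bool) (i + 1) = gap x (i + 1) := by
  have h : ∀ i, onePos (Fin.cons false x : Fin (n + 1) → Bool) i = onePos x i + 1 :=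
    onePos_cons false x
  simp [gap, h]

lemma numOnes_cons {n : ℕ} (b : Bool) (x : Fin n → Bool) :
    numOnes (Fin.cons b x : Fin (n + 1) → Bool) = numOnes x + b.toNat := by
  rw [numOnes, Fin.card_filter_univ_succ]
  cases b <;> simp [numOnes]

/-- The product `∏ i, f i (gap x i)` over the first `K` gaps of `x`, set to `0` when `x` has fewer
than `K` ones. -/
def gapProd {K : ℕ} (f : Fin K → ℕ → ℝ) {n : ℕ} (x : Fin n → Bool) : ℝ :=
  if K ≤ numOnes x then ∏ i : Fin K, f i (gap x i) else 0

lemma gapProd_cons_true {K : ℕ} (f : Fin (K + 1) → ℕ → ℝ) {n : ℕ} (x : Fin n → Bool) :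
    gapProd f (Fin.cons true x : Fin (n + 1) → Bool) = f 0 0 * gapProd (Fin.tail f) x := by
  have h0 : gap (Fin.cons true x : Fin (n + 1) → Bool) 0 = 0 := onePos_cons_true_zero x
  simp [gapProd, numOnes_cons, Fin.prod_univ_succ, h0, gap_cons_true_succ, Fin.tail]

lemma gapProd_cons_false {K : ℕ} (f : Fin (K + 1) → ℕ → ℝ) {n : ℕ} (x : Fin n → Bool) :
    gapProd f (Fin.cons false x : Fin (n + 1) → Bool) =
      gapProd (Fin.cons (fun g => f 0 (g + 1)) (Fin.tail f) : Fin (K + 1) → ℕ → ℝ) x := by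
  simp [gapProd, numOnes_cons, Fin.prod_univ_succ, gap_cons_false_zero, gap_cons_false_succ,
    Fin.tail]

lemma prod_geometric_mean_nonneg {K : ℕ} {f : Fin K → ℕ → ℝ} {μ : Fin K → ℝ}
    (hf : ∀ i g, 0 ≤ f i g) (hμ : ∀ i, HasSum (fun g => f i g / 2 ^ (g + 1)) (μ i)) :
    0 ≤ ∏ i, μ i :=
  prod_nonneg fun i _ => (hμ i).nonneg fun g => div_nonneg (hf i g) (by positivity)

lemma hasSum_geometric_shift {f : ℕ → ℝ} {m : ℝ} (h : HasSum (fun g => f g / 2 ^ (g + 1)) m) :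
    HasSum (fun g => f (g + 1) / 2 ^ (g + 1)) (2 * m - f 0) := by
  have htail := ((hasSum_nat_add_iff' 1).2 h).mul_left 2
  simp only [range_one, sum_singleton, zero_add, pow_one, mul_sub,
    mul_div_cancel₀ (f 0) two_ne_zero] at htail
  refine htail.congr_fun fun g => ?_
  rw [pow_succ _ (g + 1)]
  ring

/-- Reading the first letter either completes the first gap or shifts the argument of its factor by
one, and geometric means obey the same recursion. -/
theorem expX_gapProd_le (n : ℕ) {K : ℕ} {f : Fin K → ℕ → ℝ} {μ : Fin K → ℝ}
    (hf : ∀ i g, 0 ≤ f i g) (hμ : ∀ i, HasSum (fun g => f i g / 2 ^ (g + 1)) (μ i)) :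
    expX n (gapProd f) ≤ ∏ i, μ i := by
  induction n generalizing K with
  | zero =>
    rcases K with _ | K
    · simp [expX, gapProd]
    · simpa [expX, gapProd, numOnes] using prod_geometric_mean_nonneg hf hμ
  | succ n ih =>
    rcases K with _ | K
    · have hone : (gapProd f : (Fin (n + 1) → Bool) → ℝ) = fun _ => 1 := by
        funext x
        simp [gapProd]
      simp [hone, expX_const]
    have htrue := ih (fun i => hf i.succ) (fun i => hμ i.succ)
    have hfalse := ih
      (f := Fin.cons (fun g => f 0 (g + 1)) (Fin.tail f))
      (μ := Fin.cons (2 * μ 0 - f 0 0) (Fin.tail μ))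
      (Fin.cases (fun g => hf 0 (g + 1)) fun i => hf i.succ)
      (Fin.cases (hasSum_geometric_shift (hμ 0)) fun i => hμ i.succ)
    rw [Fin.prod_univ_succ] at hfalse
    calc expX (n + 1) (gapProd f)
        = (f 0 0 * expX n (gapProd (Fin.tail f)) +
            expX n (gapProd (Fin.cons (fun g => f 0 (g + 1)) (Fin.tail f)))) / 2 := by
          simp only [expX_succ, gapProd_cons_true, gapProd_cons_false, expX_const_mul]
      _ ≤ (f 0 0 * ∏ i : Fin K, μ i.succ + (2 * μ 0 - f 0 0) * ∏ i : Fin K, μ i.succ) / 2 := by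
          have := hf 0 0
          gcongr
          exacts [htrue, hfalse]
      _ = ∏ i, μ i := by
          rw [Fin.prod_univ_succ]
          ring

lemma hasSum_geometric_of_add_two_eq {f : ℕ → ℝ} {v : ℝ} (h : ∀ g, f (g + 2) = v) :
    HasSum (fun g => f g / 2 ^ (g + 1)) (f 0 / 2 + f 1 / 4 + v / 4) := by
  have htail : HasSum (fun g => f (g + 2) / 2 ^ (g + 2 + 1)) (v / 4) := by
    refine (hasSum_geometric_two' (v / 4)).congr_fun fun g => ?_
    rw [h]
    ring
  have hhead : f 0 / 2 + f 1 / 4 + v / 4 =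
      v / 4 + ∑ g ∈ range 2, f g / 2 ^ (g + 1) := by
    simp only [sum_range_succ, sum_range_zero]
    ring
  rw [hhead]
  exact (hasSum_nat_add_iff (f := fun g => f g / 2 ^ (g + 1)) 2).1 htail

lemma gapProd_cons_one {L : ℕ} (f : Fin L → ℕ → ℝ) {n : ℕ} (x : Fin n → Bool) :
    gapProd (Fin.cons (fun _ => 1) f : Fin (L + 1) → ℕ → ℝ) x =
      if L < numOnes x then ∏ i : Fin L, f i (gap x (i + 1)) else 0 := by
  simp [gapProd, Fin.prod_univ_succ]

lemma expX_gapProd_cons_one_le (n : ℕ) {L : ℕ} {f : Fin L → ℕ → ℝ} {μ : Fin L → ℝ}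
    (hf : ∀ i g, 0 ≤ f i g) (hμ : ∀ i, HasSum (fun g => f i g / 2 ^ (g + 1)) (μ i)) :
    expX n (gapProd (Fin.cons (fun _ => 1) f : Fin (L + 1) → ℕ → ℝ)) ≤ ∏ i, μ i := by
  have hone : HasSum (fun g : ℕ => (1 : ℝ) / 2 ^ (g + 1)) 1 := by
    convert hasSum_geometric_of_add_two_eq (f := fun _ => (1 : ℝ)) (fun _ => rfl) using 1
    norm_num
  refine (expX_gapProd_le n (μ := Fin.cons 1 μ)
    (Fin.cases (fun _ => zero_le_one) hf) (Fin.cases hone hμ)).trans_eq ?_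
  simp [Fin.prod_univ_succ]

/-- The product of `φ (gap x i) (gap y i)` over `1 ≤ i ≤ L`, set to `0` unless both strings have
more than `L` ones. -/
def pairGapProd (φ : ℕ → ℕ → ℝ) (L : ℕ) {n : ℕ} (x y : Fin n → Bool) : ℝ :=
  if L < numOnes x ∧ L < numOnes y then ∏ i : Fin L, φ (gap x (i + 1)) (gap y (i + 1)) else 0

lemma expXY_pairGapProd_le (n L : ℕ) {φ : ℕ → ℕ → ℝ} {ψ : ℕ → ℝ} {m : ℝ}
    (hφ : ∀ a b, 0 ≤ φ a b) (hψ : ∀ a, HasSum (fun b => φ a b / 2 ^ (b + 1)) (ψ a))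
    (hm : HasSum (fun a => ψ a / 2 ^ (a + 1)) m) :
    expXY n (pairGapProd φ L) ≤ m ^ L := by
  have hψ_nonneg : ∀ a, 0 ≤ ψ a := fun a =>
    (hψ a).nonneg fun b => div_nonneg (hφ a b) (by positivity)
  have hcond : ∀ x : Fin n → Bool, expX n (pairGapProd φ L x) ≤
      gapProd (Fin.cons (fun _ => 1) fun _ => ψ : Fin (L + 1) → ℕ → ℝ) x := by
    intro x
    rw [gapProd_cons_one]
    split_ifs with hx
    · have hprod : pairGapProd φ L x = gapProd
          (Fin.cons (fun _ => 1) fun i : Fin L => φ (gap x (i + 1)) : Fin (L + 1) → ℕ → ℝ) := by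
        funext y
        simp [pairGapProd, gapProd_cons_one, hx]
      rw [hprod]
      exact expX_gapProd_cons_one_le n (fun _ => hφ _) fun _ => hψ _
    · have hzero : pairGapProd φ L x = fun _ => 0 := by
        funext y
        simp [pairGapProd, hx]
      rw [hzero, expX_const]
  calc expXY n (pairGapProd φ L)
      = expX n fun x => expX n (pairGapProd φ L x) := expXY_eq_expX_expX _
    _ ≤ expX n (gapProd (Fin.cons (fun _ => 1) fun _ => ψ : Fin (L + 1) → ℕ → ℝ)) :=
        expX_mono hcond
    _ ≤ ∏ _i : Fin L, m := expX_gapProd_cons_one_le n (fun _ => hψ_nonneg) fun _ => hm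
    _ = m ^ L := by simp

/-! ### Large deviations for unit gaps facing long gaps -/

/-- The indices of the unit gaps of `x` among the `L` gaps which follow its first one. -/
def unitGaps (L : ℕ) {n : ℕ} (x : Fin n → Bool) : Finset (Fin L) :=
  univ.filter fun i => gap x (i + 1) = 1

/-- The indices in `unitGaps L x` at which the gap of `y` has length at least two. -/
def longUnitGaps (L : ℕ) {n : ℕ} (x y : Fin n → Bool) : Finset (Fin L) :=
  univ.filter fun i => gap x (i + 1) = 1 ∧ 2 ≤ gap y (i + 1)

/-- The deviation event: among the first `L` gaps, at most a proportion `c` of the unit gaps of `x`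
face a gap of length at least two in `y`, up to an excess `D`. -/
def FewLongGaps (c D : ℝ) (L : ℕ) {n : ℕ} (x y : Fin n → Bool) : Prop :=
  L < numOnes x ∧ L < numOnes y ∧
    ((longUnitGaps L x y).card : ℝ) ≤ c * (unitGaps L x).card + D

/-- The contribution of a pair of facing gaps of lengths `a` and `b` to
`c * #unitGaps - #longUnitGaps`. -/
def gapScore (c : ℝ) (a b : ℕ) : ℝ :=
  if a = 1 then (if 2 ≤ b then c - 1 else c) else 0

/-- The moment generating function of `gapScore c` at two independent geometric gap lengths, each
equal to `g` with probability `1 / 2 ^ (g + 1)`. -/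
def gapMGF (c lam : ℝ) : ℝ :=
  (12 + 3 * Real.exp (lam * c) + Real.exp (lam * (c - 1))) / 16

lemma sum_gapScore (c : ℝ) (L : ℕ) {n : ℕ} (x y : Fin n → Bool) :
    ∑ i : Fin L, gapScore c (gap x (i + 1)) (gap y (i + 1)) =
      c * (unitGaps L x).card - (longUnitGaps L x y).card := by
  rw [unitGaps, longUnitGaps, ← sum_boole, ← sum_boole, mul_sum, ← sum_sub_distrib]
  refine sum_congr rfl fun i _ => ?_
  by_cases ha : gap x (i + 1) = 1 <;> by_cases hb : 2 ≤ gap y (i + 1) <;> simp [gapScore, ha, hb]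

lemma expXY_exp_gapScore_le (n L : ℕ) (c lam : ℝ) :
    expXY n (pairGapProd (fun a b => Real.exp (lam * gapScore c a b)) L) ≤ gapMGF c lam ^ L := by
  have hinner : ∀ a, HasSum (fun b => Real.exp (lam * gapScore c a b) / 2 ^ (b + 1))
      (if a = 1 then (3 * Real.exp (lam * c) + Real.exp (lam * (c - 1))) / 4 else 1) := by
    intro a
    convert hasSum_geometric_of_add_two_eq (v := Real.exp (lam * gapScore c a 2))
      (f := fun b => Real.exp (lam * gapScore c a b)) (fun _ => by simp [gapScore]) using 1
    split_ifs with ha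
    · simp only [gapScore, ha, Nat.not_ofNat_le_one, nonpos_iff_eq_zero, OfNat.ofNat_ne_zero,
        le_refl, if_true, if_false]
      ring
    · norm_num [gapScore, ha]
  have houter : HasSum (fun a => (if a = 1 then
      (3 * Real.exp (lam * c) + Real.exp (lam * (c - 1))) / 4 else 1) / 2 ^ (a + 1))
      (gapMGF c lam) := by
    convert hasSum_geometric_of_add_two_eq (v := 1) (f := fun a => if a = 1 then
      (3 * Real.exp (lam * c) + Real.exp (lam * (c - 1))) / 4 else 1) (fun _ => by simp) using 1
    simp only [gapMGF, zero_ne_one, if_true, if_false]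
    ring
  exact expXY_pairGapProd_le n L (fun _ _ => (Real.exp_pos _).le) hinner houter

lemma probXY_fewLongGaps_le (n L : ℕ) (c D : ℝ) {lam : ℝ} (hlam : 0 ≤ lam) :
    probXY n (FewLongGaps c D L) ≤ Real.exp (lam * D) * gapMGF c lam ^ L := by
  set W : (Fin n → Bool) → (Fin n → Bool) → ℝ :=
    pairGapProd (fun a b => Real.exp (lam * gapScore c a b)) L with hW
  have hW_nonneg : ∀ x y, 0 ≤ Real.exp (lam * D) * W x y := fun x y => by
    simp only [hW, pairGapProd]
    split_ifs <;> positivity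
  have hW_ge : ∀ x y, FewLongGaps c D L x y → 1 ≤ Real.exp (lam * D) * W x y := by
    rintro x y ⟨hx, hy, hle⟩
    simp only [hW, pairGapProd, hx, hy, and_self, if_true]
    rw [← Real.exp_sum, ← mul_sum, sum_gapScore, ← Real.exp_add, ← mul_add]
    exact Real.one_le_exp (mul_nonneg hlam (by linarith))
  calc probXY n (FewLongGaps c D L)
      ≤ expXY n fun x y => Real.exp (lam * D) * W x y := probXY_le_expXY hW_nonneg hW_ge
    _ = Real.exp (lam * D) * expXY n W := by simp only [expXY_eq_expX_expX, expX_const_mul]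
    _ ≤ Real.exp (lam * D) * gapMGF c lam ^ L := by
        gcongr
        exact expXY_exp_gapScore_le n L c lam

/-- A geometric gap is long with probability `1/4 > c`, so `gapScore c` has negative mean and its
moment generating function decreases at `0`. -/
lemma exists_gapMGF_le_exp_neg {c : ℝ} (hc : c < 1 / 4) :
    ∃ lam > 0, ∃ δ > 0, gapMGF c lam ≤ Real.exp (-δ) := by
  have hderiv : HasDerivAt (fun lam => gapMGF c lam - 1) ((4 * c - 1) / 16) 0 := by
    have hexp : ∀ a : ℝ, HasDerivAt (fun lam : ℝ => Real.exp (lam * a)) a 0 := fun a => by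
      simpa using ((hasDerivAt_id (0 : ℝ)).mul_const a).exp
    exact ((((((hexp c).const_mul 3).const_add 12).add (hexp (c - 1))).div_const 16).sub_const
      1).congr_deriv (by ring)
  have hsign := eventually_nhdsWithin_sign_eq_of_deriv_neg
    (by rw [hderiv.deriv]; linarith) (by norm_num [gapMGF])
  obtain ⟨lam, hlt, hlam⟩ := ((hsign.filter_mono nhdsWithin_le_nhds).and
    (self_mem_nhdsWithin (s := Set.Ioi (0 : ℝ)))).exists
  rw [sign_neg (sub_neg.2 hlam), sign_eq_neg_one_iff, sub_neg] at hlt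
  have hpos : 0 < gapMGF c lam := by unfold gapMGF; positivity
  exact ⟨lam, hlam, -Real.log (gapMGF c lam), neg_pos.2 (Real.log_neg hpos hlt),
    by rw [neg_neg, Real.exp_log hpos]⟩

lemma probXY_fewLongGaps_flipOn_le {n L : ℕ} (A B : Finset (Fin n)) {c D lam δ t : ℝ}
    (hlam : 0 ≤ lam) (hδ : 0 ≤ δ) (hmgf : gapMGF c lam ≤ Real.exp (-δ)) (ht : t ≤ L) :
    probXY n (fun x y => FewLongGaps c D L (flipOn A x) (flipOn B y)) ≤
      Real.exp (lam * D) * Real.exp (-δ * t) := by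
  have hmgf_nonneg : 0 ≤ gapMGF c lam := by unfold gapMGF; positivity
  calc probXY n (fun x y => FewLongGaps c D L (flipOn A x) (flipOn B y))
      = probXY n (FewLongGaps c D L) := probXY_flipOn A B _
    _ ≤ Real.exp (lam * D) * gapMGF c lam ^ L := probXY_fewLongGaps_le n L c D hlam
    _ ≤ Real.exp (lam * D) * Real.exp (-δ) ^ L := by gcongr
    _ = Real.exp (lam * D) * Real.exp (-δ * L) := by rw [← Real.exp_nat_mul, mul_comm (L : ℝ)]
    _ ≤ Real.exp (lam * D) * Real.exp (-δ * t) := by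
        gcongr _ * Real.exp ?_
        exact mul_le_mul_of_nonpos_left ht (neg_nonpos.2 hδ)

/-! ### From alignments to gaps -/

/-- The positions of the ones of `x` that the selection `p` skips: they precede an entry of `p`
without being one. -/
def skipped {n K : ℕ} (x : Fin n → Bool) (p : Fin K → Fin n) : Finset (Fin n) :=
  univ.filter fun j => x j = true ∧ (∃ i, j ≤ p i) ∧ ∀ i, p i ≠ j

/-- The indices `i` for which `A` meets the open interval between the `i`-th entry of `p` and the
next one. -/
def straddling {n L : ℕ} (A : Finset (Fin n)) (p : Fin (L + 1) → Fin n) : Finset (Fin L) :=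
  univ.filter fun i => ∃ j ∈ A, p i.castSucc < j ∧ j < p i.succ

section Selection

variable {n K L : ℕ} {x : Fin n → Bool}

lemma flipOn_skipped_eq_true_iff {p : Fin K → Fin n} (hx : ∀ i, x (p i) = true) {j : Fin n}
    (hj : ∃ i, j ≤ p i) : flipOn (skipped x p) x j = true ↔ ∃ i, p i = j := by
  constructor
  · intro h
    by_contra! hne
    by_cases hxj : x j = true <;> simp [flipOn, skipped, hj, hne, hxj] at h
  · rintro ⟨i, rfl⟩
    simp [flipOn, skipped, hx]

lemma onePos_flipOn_skipped {p : Fin K → Fin n} (hp : StrictMono p) (hx : ∀ i, x (p i) = true)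
    (i : Fin K) : onePos (flipOn (skipped x p) x) i = p i := by
  set P : ℕ → Prop := fun j => ext (flipOn (skipped x p) x) j = true with hP
  have hP_iff : ∀ j : Fin n, j ≤ p i → (P j ↔ ∃ l, p l = j) := fun j hj => by
    simp only [hP]
    rw [ext_apply_val, flipOn_skipped_eq_true_iff hx ⟨i, hj⟩]
  have hbelow : (range (p i)).filter P = (Iio i).image fun l => (p l : ℕ) := by
    ext j
    simp only [mem_filter, mem_range, mem_image, mem_Iio]
    constructor
    · rintro ⟨hj, hPj⟩
      obtain ⟨l, hl⟩ := (hP_iff ⟨j, hj.trans (p i).isLt⟩ hj.le).1 hPj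
      exact ⟨l, hp.lt_iff_lt.1 (by rw [hl]; exact hj), by rw [hl]⟩
    · rintro ⟨l, hl, rfl⟩
      exact ⟨hp hl, (hP_iff (p l) (hp hl).le).2 ⟨l, rfl⟩⟩
  have hcount : Nat.count P (p i) = i := by
    have hinj : Function.Injective fun l => (p l : ℕ) := Fin.val_injective.comp hp.injective
    rw [Nat.count_eq_card_filter_range, hbelow, card_image_of_injective _ hinj, Fin.card_Iio]
  calc onePos (flipOn (skipped x p) x) i = Nat.nth P (Nat.count P (p i)) := by rw [hcount]; rfl
    _ = p i := Nat.nth_count ((hP_iff (p i) le_rfl).2 ⟨i, rfl⟩)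

lemma le_numOnes_flipOn_skipped {p : Fin K → Fin n} (hp : StrictMono p)
    (hx : ∀ i, x (p i) = true) : K ≤ numOnes (flipOn (skipped x p) x) := by
  simpa [numOnes] using card_le_card_of_injOn (s := univ) p
    (fun i _ => by simpa using (flipOn_skipped_eq_true_iff hx ⟨i, le_rfl⟩).2 ⟨i, rfl⟩)
    hp.injective.injOn

lemma gap_flipOn_skipped {p : Fin (L + 1) → Fin n} (hp : StrictMono p)
    (hx : ∀ i, x (p i) = true) (i : Fin L) :
    gap (flipOn (skipped x p) x) (i + 1) = (p i.succ : ℕ) - p i.castSucc - 1 := by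
  rw [← onePos_flipOn_skipped hp hx i.succ, ← onePos_flipOn_skipped hp hx i.castSucc]
  rfl

lemma eq_false_of_notMem_straddling {p : Fin (L + 1) → Fin n} (hp : StrictMono p) {i : Fin L}
    (hi : i ∉ straddling (skipped x p) p) {j : Fin n} (hj : p i.castSucc < j)
    (hj' : j < p i.succ) : x j = false := by
  by_contra hxj
  refine hi (mem_filter.2 ⟨mem_univ i, j, ?_, hj, hj'⟩)
  refine mem_filter.2 ⟨mem_univ j, by simpa using hxj, ⟨i.succ, hj'.le⟩, ?_⟩
  rintro l rfl
  exact (Fin.castSucc_lt_iff_succ_le.1 (hp.lt_iff_lt.1 hj)).not_gt (hp.lt_iff_lt.1 hj')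

lemma card_straddling_le {p : Fin (L + 1) → Fin n} (hp : StrictMono p) (A : Finset (Fin n)) :
    (straddling A p).card ≤ A.card := by
  refine card_le_card_of_forall_subsingleton (fun i j => p i.castSucc < j ∧ j < p i.succ)
    (fun i hi => (mem_filter.1 hi).2) fun j _ => ?_
  have hle : ∀ i i' : Fin L, p i.castSucc < j → j < p i'.succ → i ≤ i' := fun i i' hi hi' =>
    Fin.castSucc_lt_succ_iff.1 (hp.lt_iff_lt.1 (hi.trans hi'))
  rintro i ⟨-, hi, hi'⟩ l ⟨-, hl, hl'⟩
  exact le_antisymm (hle i l hi hl') (hle l i hl hi')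

lemma card_skipped_comp_le {e : Fin K → Fin L} {P : Fin L → Prop} (he : Set.range e = {i | P i})
    (π : Fin L → Fin n) :
    (skipped x (π ∘ e)).card ≤ (univ.filter fun j : Fin n => x j = true ∧
      (j : ℕ) ≤ ((univ.filter P).sup fun i => (π i : ℕ)) ∧ ∀ i, P i → π i ≠ j).card := by
  refine card_le_card fun j hj => ?_
  obtain ⟨-, hxj, ⟨l, hl⟩, hne⟩ := mem_filter.1 hj
  refine mem_filter.2 ⟨mem_univ j, hxj, ?_, fun i hi => ?_⟩
  · exact (Fin.le_def.1 hl).trans (le_sup (f := fun i => (π i : ℕ))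
      (mem_filter.2 ⟨mem_univ (e l), he.subset ⟨l, rfl⟩⟩))
  · obtain ⟨l, rfl⟩ := he.superset hi
    exact hne l

end Selection

section Alignment

variable {n k L : ℕ} {x y : Fin n → Bool} {π ν : Fin k → Fin n} {e : Fin (L + 1) → Fin k}

lemma N1count_le_card_unitGaps (hπ : StrictMono π) (he_mono : StrictMono e)
    (he : Set.range e = {i | matchedPair x y π ν i}) :
    N1count x y π ν ≤ (unitGaps L (flipOn (skipped x (π ∘ e)) x)).card := by
  have hmatched : ∀ l, matchedPair x y π ν (e l) := fun l => he.subset ⟨l, rfl⟩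
  have hp : StrictMono (π ∘ e) := hπ.comp he_mono
  refine (card_le_card ?_).trans
    (card_image_le (f := fun i : Fin L => (e i.castSucc, e i.succ)))
  rintro ⟨a, b⟩ hab
  obtain ⟨-, hlt, ha, hb, hπab, hzero, -⟩ := mem_filter.1 hab
  obtain ⟨l, rfl⟩ := he.superset ha
  obtain ⟨l', rfl⟩ := he.superset hb
  obtain ⟨i, rfl⟩ := Fin.eq_castSucc_of_ne_last ((he_mono.lt_iff_lt.1 hlt).trans_le l'.le_last).ne
  have hl' : l' = i.succ := by
    refine le_antisymm (not_lt.1 fun h => ?_)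
      (Fin.castSucc_lt_iff_succ_le.1 (he_mono.lt_iff_lt.1 hlt))
    have hxi : x (π (e i.succ)) = false := hzero _ (hp Fin.castSucc_lt_succ) (hp h)
    simp [(hmatched i.succ).1] at hxi
  subst hl'
  refine mem_image.2 ⟨i, mem_filter.2 ⟨mem_univ i, ?_⟩, rfl⟩
  rw [gap_flipOn_skipped hp fun l => (hmatched l).1]
  simp only [Function.comp_apply] at hπab ⊢
  omega

lemma card_longUnitGaps_le (hπ : StrictMono π) (hν : StrictMono ν) (he_mono : StrictMono e)
    (he : Set.range e = {i | matchedPair x y π ν i}) :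
    (longUnitGaps L (flipOn (skipped x (π ∘ e)) x) (flipOn (skipped y (ν ∘ e)) y)).card ≤
      N1gtCount x y π ν + ((skipped x (π ∘ e)).card + (skipped y (ν ∘ e)).card) := by
  have hmatched : ∀ l, matchedPair x y π ν (e l) := fun l => he.subset ⟨l, rfl⟩
  have hp : StrictMono (π ∘ e) := hπ.comp he_mono
  have hq : StrictMono (ν ∘ e) := hν.comp he_mono
  set G := longUnitGaps L (flipOn (skipped x (π ∘ e)) x) (flipOn (skipped y (ν ∘ e)) y)
  set B := straddling (skipped x (π ∘ e)) (π ∘ e) ∪ straddling (skipped y (ν ∘ e)) (ν ∘ e)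
  have hB : B.card ≤ (skipped x (π ∘ e)).card + (skipped y (ν ∘ e)).card :=
    (card_union_le _ _).trans (add_le_add (card_straddling_le hp _) (card_straddling_le hq _))
  have hGB : (G \ B).card ≤ N1gtCount x y π ν := by
    refine card_le_card_of_injOn (fun i => (e i.castSucc, e i.succ)) (fun i hi => ?_) ?_
    · obtain ⟨hiG, hiB⟩ := mem_sdiff.1 hi
      obtain ⟨hix, hiy⟩ := not_or.1 (mt mem_union.2 hiB)
      obtain ⟨-, hgx, hgy⟩ := mem_filter.1 hiG
      rw [gap_flipOn_skipped hp fun l => (hmatched l).1] at hgx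
      rw [gap_flipOn_skipped hq fun l => (hmatched l).2] at hgy
      simp only [Function.comp_apply] at hgx hgy
      have hπ_eq : (π (e i.succ) : ℕ) = π (e i.castSucc) + 2 := by omega
      have hν_lt : (ν (e i.castSucc) : ℕ) + 2 < ν (e i.succ) := by omega
      exact mem_filter.2 ⟨by simp, he_mono Fin.castSucc_lt_succ, hmatched _, hmatched _, hπ_eq,
        fun j => eq_false_of_notMem_straddling hp hix,
        fun j => eq_false_of_notMem_straddling hq hiy, hν_lt⟩
    · intro i _ i' _ h
      exact Fin.castSucc_injective L (he_mono.injective (Prod.ext_iff.1 h).1)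
  calc G.card ≤ (G \ B).card + B.card := card_le_card_sdiff_add_card
    _ ≤ _ := add_le_add hGB hB

end Alignment

/-! ### The union bound -/

/-- The event that `N₁> ≥ c N₁`, as a ratio, for every alignment in `V`, optimal or not. When
`N₁ = 0` the ratio is `0`. -/
def RatioEvent (c ε : ℝ) {n : ℕ} (x y : Fin n → Bool) : Prop :=
  ∀ (k : ℕ) (π ν : Fin k → Fin n), StrictMono π → StrictMono ν → inV ε x y π ν →
    c ≤ (N1gtCount x y π ν : ℝ) / (N1count x y π ν : ℝ)

lemma RatioEvent.mono {c c' ε ε' : ℝ} (hc : c ≤ c') (hε : ε ≤ ε') {n : ℕ} {x y : Fin n → Bool}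
    (h : RatioEvent c' ε' x y) : RatioEvent c ε x y := by
  rintro k π ν hπ hν ⟨hmatched, hskipped⟩
  refine hc.trans (h k π ν hπ hν ⟨?_, ?_⟩)
  · exact le_trans (by gcongr) hmatched
  · exact hskipped.trans (by gcongr)

lemma ratioEvent_const_false {c ε : ℝ} (hε : ε ≤ 1) {n : ℕ} (hn : 0 < n) :
    RatioEvent c ε (fun _ : Fin n => false) (fun _ => false) := by
  intro k π ν _ _ ⟨hmatched, _⟩
  have hpos : (0 : ℝ) < (1 / 2 - ε / 8) * n := mul_pos (by linarith) (by exact_mod_cast hn)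
  have hzero : numMatched (fun _ => false) (fun _ => false) π ν = 0 :=
    card_eq_zero.2 (filter_eq_empty_iff.2 fun _ _ h => Bool.false_ne_true h.1)
  rw [hzero, Nat.cast_zero] at hmatched
  linarith

lemma N1gtCount_le_N1count {n k : ℕ} (x y : Fin n → Bool) (π ν : Fin k → Fin n) :
    N1gtCount x y π ν ≤ N1count x y π ν :=
  card_le_card (monotone_filter_right _ fun _ _ ⟨hlt, ha, hb, hπ, hx, hy, _⟩ =>
    ⟨hlt, ha, hb, hπ, hx, hy⟩)

lemma exists_flip_fewLongGaps {n k L : ℕ} {x y : Fin n → Bool} {π ν : Fin k → Fin n} {c D : ℝ}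
    (hc : 0 ≤ c) (hπ : StrictMono π) (hν : StrictMono ν) (hL : numMatched x y π ν = L + 1)
    (hratio : (N1gtCount x y π ν : ℝ) ≤ c * N1count x y π ν)
    (hD : (skippedOnesX x y π ν + skippedOnesY x y π ν : ℝ) ≤ D) :
    ∃ C : Finset (Fin n ⊕ Fin n), (C.card : ℝ) ≤ D ∧
      FewLongGaps c D L (flipOn C.toLeft x) (flipOn C.toRight y) := by
  set e := (univ.filter (matchedPair x y π ν)).orderEmbOfFin hL
  have he : Set.range e = {i | matchedPair x y π ν i} :=
    (range_orderEmbOfFin _ hL).trans (by ext i; simp)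
  have hmatched : ∀ l, matchedPair x y π ν (e l) := fun l => he.subset ⟨l, rfl⟩
  have hA : (skipped x (π ∘ e)).card ≤ skippedOnesX x y π ν := card_skipped_comp_le he π
  have hB : (skipped y (ν ∘ e)).card ≤ skippedOnesY x y π ν := card_skipped_comp_le he ν
  have hAB : ((skipped x (π ∘ e)).card + (skipped y (ν ∘ e)).card : ℝ) ≤ D :=
    le_trans (by gcongr) hD
  refine ⟨(skipped x (π ∘ e)).disjSum (skipped y (ν ∘ e)), ?_, ?_⟩
  · rw [card_disjSum]
    exact_mod_cast hAB
  rw [toLeft_disjSum, toRight_disjSum]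
  refine ⟨le_numOnes_flipOn_skipped (hπ.comp e.strictMono) fun l => (hmatched l).1,
    le_numOnes_flipOn_skipped (hν.comp e.strictMono) fun l => (hmatched l).2, ?_⟩
  have hN1 : (N1count x y π ν : ℝ) ≤ (unitGaps L (flipOn (skipped x (π ∘ e)) x)).card :=
    mod_cast N1count_le_card_unitGaps hπ e.strictMono he
  have hlong := Nat.cast_le (α := ℝ).2 (card_longUnitGaps_le hπ hν e.strictMono he)
  push_cast at hlong
  linarith [mul_le_mul_of_nonneg_left hN1 hc]

lemma exists_fewLongGaps_of_not_ratioEvent {c ε : ℝ} (hc : 0 ≤ c) (hε₀ : 0 ≤ ε) (hε₁ : ε ≤ 1)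
    {n : ℕ} (hn : 0 < n) {x y : Fin n → Bool} (h : ¬ RatioEvent c ε x y) :
    ∃ L ∈ (range n).filter fun L : ℕ => (n : ℝ) / 4 - 1 ≤ L,
      ∃ C ∈ univ.filter fun C : Finset (Fin n ⊕ Fin n) => (C.card : ℝ) ≤ ε * n / 2,
        FewLongGaps c (ε * n / 2) L (flipOn C.toLeft x) (flipOn C.toRight y) := by
  simp only [RatioEvent, not_forall, not_le] at h
  obtain ⟨k, π, ν, hπ, hν, ⟨hmatched, hskipped⟩, hlt⟩ := h
  have hn' : (0 : ℝ) < n := by exact_mod_cast hn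
  have hquarter : (n : ℝ) / 4 ≤ numMatched x y π ν := by nlinarith
  obtain ⟨L, hL⟩ : ∃ L, numMatched x y π ν = L + 1 := Nat.exists_eq_add_one.2 <| by
    have : (0 : ℝ) < numMatched x y π ν := by linarith
    exact_mod_cast this
  have hle : numMatched x y π ν ≤ n :=
    ((card_le_univ _).trans_eq (Fintype.card_fin k)).trans
      (by simpa using Fintype.card_le_of_injective π hπ.injective)
  have hratio : (N1gtCount x y π ν : ℝ) ≤ c * N1count x y π ν := by
    rcases (N1count x y π ν).eq_zero_or_pos with h0 | hpos
    · simp [h0, Nat.le_zero.1 ((N1gtCount_le_N1count x y π ν).trans_eq h0)]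
    · exact ((div_lt_iff₀ (by exact_mod_cast hpos)).1 hlt).le
  obtain ⟨C, hC, hfew⟩ := exists_flip_fewLongGaps hc hπ hν hL hratio
    (hskipped.trans (by gcongr : _ ≤ ε * n / 2))
  rw [hL] at hquarter
  push_cast at hquarter
  exact ⟨L, mem_filter.2 ⟨mem_range.2 (by omega), by linarith⟩, C,
    mem_filter.2 ⟨mem_univ C, hC⟩, hfew⟩

lemma probXY_not_ratioEvent_le {c ε lam δ τ : ℝ} (hc : 0 ≤ c) (hε₀ : 0 ≤ ε) (hε₁ : ε ≤ 1)
    (hlam : 0 ≤ lam) (hδ : 0 ≤ δ) (hmgf : gapMGF c lam ≤ Real.exp (-δ)) (hτ : 0 ≤ τ) {n : ℕ}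
    (hn : 0 < n) :
    probXY n (fun x y => ¬ RatioEvent c ε x y) ≤ n * Real.exp
      (δ + (τ * (ε / 2) + 2 * Real.exp (-τ) + lam * (ε / 2) - δ / 4) * n) := by
  set D := ε * n / 2 with hD
  set lengths := (range n).filter fun L : ℕ => (n : ℝ) / 4 - 1 ≤ L
  set flips := univ.filter fun C : Finset (Fin n ⊕ Fin n) => (C.card : ℝ) ≤ D
  have hlengths : (lengths.card : ℝ) ≤ n := by
    exact_mod_cast (card_filter_le _ _).trans_eq (card_range n)
  have hflips : (flips.card : ℝ) ≤ Real.exp (τ * D + (n + n) * Real.exp (-τ)) := by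
    simpa using card_filter_card_le_exp (Fin n ⊕ Fin n) hτ D
  calc probXY n (fun x y => ¬ RatioEvent c ε x y)
      ≤ probXY n fun x y => ∃ L ∈ lengths, ∃ C ∈ flips,
          FewLongGaps c D L (flipOn C.toLeft x) (flipOn C.toRight y) :=
        probXY_mono fun x y => exists_fewLongGaps_of_not_ratioEvent hc hε₀ hε₁ hn
    _ ≤ ∑ L ∈ lengths, ∑ C ∈ flips, probXY n fun x y =>
          FewLongGaps c D L (flipOn C.toLeft x) (flipOn C.toRight y) :=
        (probXY_exists_le _ _).trans (sum_le_sum fun L _ => probXY_exists_le _ _)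
    _ ≤ ∑ _L ∈ lengths, ∑ _C ∈ flips, Real.exp (lam * D) * Real.exp (-δ * (n / 4 - 1)) :=
        sum_le_sum fun L hL => sum_le_sum fun C _ =>
          probXY_fewLongGaps_flipOn_le _ _ hlam hδ hmgf (mem_filter.1 hL).2
    _ = lengths.card * (flips.card * (Real.exp (lam * D) * Real.exp (-δ * (n / 4 - 1)))) := by
        simp only [sum_const, nsmul_eq_mul]
    _ ≤ n * (Real.exp (τ * D + (n + n) * Real.exp (-τ)) *
          (Real.exp (lam * D) * Real.exp (-δ * (n / 4 - 1)))) := by gcongr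
    _ = _ := by
        rw [← Real.exp_add, ← Real.exp_add, hD]
        ring_nf

lemma exists_probXY_not_ratioEvent_le {c : ℝ} (hc₀ : 0 ≤ c) (hc : c < 1 / 4) :
    ∃ ε > 0, ε ≤ 1 ∧ ∃ a, ∃ b > 0, ∀ n : ℕ, 0 < n →
      probXY n (fun x y => ¬ RatioEvent c ε x y) ≤ n * Real.exp (a - b * n) := by
  obtain ⟨lam, hlam, δ, hδ, hmgf⟩ := exists_gapMGF_le_exp_neg hc
  obtain ⟨τ, hτ, hτδ⟩ : ∃ τ > 0, Real.exp (-τ) ≤ δ / 32 :=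
    ((Filter.eventually_gt_atTop 0).and
      (Real.tendsto_exp_neg_atTop_nhds_zero.eventually_le_const (by positivity))).exists
  refine ⟨min 1 (δ / (8 * (τ + lam))), by positivity, min_le_left _ _, δ, δ / 8, by positivity,
    fun n hn => ?_⟩
  set ε := min 1 (δ / (8 * (τ + lam)))
  have hε : (τ + lam) * ε ≤ δ / 8 := by
    have h : ε * (8 * (τ + lam)) ≤ δ := (le_div_iff₀ (by positivity)).1 (min_le_right _ _)
    linarith
  refine (probXY_not_ratioEvent_le hc₀ (by positivity) (min_le_left _ _) hlam.le hδ.le hmgf hτ.le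
    hn).trans ?_
  gcongr
  have hrate : τ * (ε / 2) + 2 * Real.exp (-τ) + lam * (ε / 2) - δ / 4 ≤ -(δ / 8) := by linarith
  linarith [mul_le_mul_of_nonneg_right hrate n.cast_nonneg]

/-- For large `n` half of the rate absorbs the polynomial factor; for the finitely many others,
`p n < 1` leaves room for a small rate. -/
lemma exists_le_exp_neg {p : ℕ → ℝ} {a b : ℝ} (hb : 0 < b) (hp₀ : p 0 ≤ 1)
    (hp_lt : ∀ n, 0 < n → p n < 1) (hp_le : ∀ n : ℕ, 0 < n → p n ≤ n * Real.exp (a - b * n)) :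
    ∃ γ > 0, ∀ n : ℕ, p n ≤ Real.exp (-γ * n) := by
  have hlim : Filter.Tendsto (fun n : ℕ => Real.exp a * ((n : ℝ) * Real.exp (-(b / 2) * n)))
      Filter.atTop (nhds 0) := by
    simpa [Function.comp_def] using ((tendsto_rpow_mul_exp_neg_mul_atTop_nhds_zero 1 (b / 2)
      (half_pos hb)).comp tendsto_natCast_atTop_atTop).const_mul (Real.exp a)
  obtain ⟨N, hN⟩ := Filter.eventually_atTop.1 (hlim.eventually_le_const one_pos)
  have hsmall : ∀ᶠ γ in nhdsWithin (0 : ℝ) (Set.Ioi 0), ∀ n ∈ range N, p n ≤ Real.exp (-γ * n) := by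
    refine (Filter.eventually_all_finset _).2 fun n _ => ?_
    rcases n.eq_zero_or_pos with rfl | hn
    · simpa using hp₀
    · have hcont : Filter.Tendsto (fun γ : ℝ => Real.exp (-γ * n)) (nhds 0) (nhds 1) := by
        have : Continuous fun γ : ℝ => Real.exp (-γ * n) := by fun_prop
        simpa using this.tendsto 0
      exact (hcont.mono_left nhdsWithin_le_nhds).eventually_const_le (hp_lt n hn)
  obtain ⟨γ, hγ, hγ_pos, hγb⟩ := (hsmall.and (Ioc_mem_nhdsGT (half_pos hb))).exists
  refine ⟨γ, hγ_pos, fun n => ?_⟩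
  rcases lt_or_ge n N with hn | hn
  · exact hγ n (mem_range.2 hn)
  rcases n.eq_zero_or_pos with rfl | hn_pos
  · simpa using hp₀
  calc p n ≤ n * Real.exp (a - b * n) := hp_le n hn_pos
    _ = Real.exp a * (n * Real.exp (-(b / 2) * n)) * Real.exp (-(b / 2) * n) := by
        rw [mul_assoc, mul_assoc, ← Real.exp_add, mul_left_comm, ← Real.exp_add]
        ring_nf
    _ ≤ 1 * Real.exp (-γ * n) := by
        gcongr
        exact hN n hn
    _ = Real.exp (-γ * n) := one_mul _

theorem prob_Dn_event_general {c : ℝ} (hc : c < 1 / 4) :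
    ∃ ε₀ > 0, ∃ γ > 0, ∀ ε ≤ ε₀, ∀ n : ℕ,
      1 - Real.exp (-γ * n) ≤ probXY n (RatioEvent c ε) := by
  obtain ⟨ε₀, hε₀, hε₁, a, b, hb, hle⟩ :=
    exists_probXY_not_ratioEvent_le (le_max_right c 0) (max_lt hc (by norm_num))
  have hlt : ∀ n, 0 < n → probXY n (fun x y => ¬ RatioEvent (max c 0) ε₀ x y) < 1 := fun n hn => by
    rw [probXY_not]
    linarith [probXY_pos (ratioEvent_const_false (c := max c 0) hε₁ hn)]
  have hzero : probXY 0 (fun x y => ¬ RatioEvent (max c 0) ε₀ x y) ≤ 1 := by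
    rw [probXY_not]
    exact sub_le_self 1 (probXY_nonneg _)
  obtain ⟨γ, hγ, hexp⟩ := exists_le_exp_neg hb hzero hlt hle
  refine ⟨ε₀, hε₀, γ, hγ, fun ε hε n => ?_⟩
  calc 1 - Real.exp (-γ * n) ≤ probXY n (RatioEvent (max c 0) ε₀) := by
        have := hexp n
        rw [probXY_not] at this
        linarith
    _ ≤ probXY n (RatioEvent c ε) := probXY_mono fun x y => RatioEvent.mono (le_max_left c 0) hε

/-- for every `ε₁ > 0` there exists `ε₀ > 0` such that for every
`ε ∈ (0, ε₀)` with `S > 16/ε` there is a constant `γ_d > 0`, independent of `n`, with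
`P(Dⁿ) ≥ 1 - e^{-γ_d n}` for all `n`, where `Dⁿ` is the event that every optimal alignment
`v ∈ V` of `X` and `Y` satisfies `N₁>(v)/N₁(v) ≥ 1/4 - ε₁/4`. -/
theorem prob_Dn_event (ε₁ : ℝ) (hε₁ : 0 < ε₁) :
    ∃ ε₀ > (0 : ℝ), ∀ ε : ℝ, 0 < ε → ε < ε₀ → ∀ S : ℝ, 16 / ε < S →
      ∃ γd > (0 : ℝ), ∀ n : ℕ,
        1 - Real.exp (-γd * n) ≤ probXY n (fun x y =>
          ∀ (k : ℕ) (π ν : Fin k → Fin n), IsOptimal S x y π ν → inV ε x y π ν →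
            1 / 4 - ε₁ / 4 ≤ (N1gtCount x y π ν : ℝ) / (N1count x y π ν : ℝ)) := by
  obtain ⟨ε₀, hε₀, γ, hγ, h⟩ := prob_Dn_event_general (c := 1 / 4 - ε₁ / 4) (by linarith)
  exact ⟨ε₀, hε₀, fun ε _ hε _ _ => ⟨γ, hγ, fun n => (h ε hε.le n).trans <|
    probXY_mono fun x y hxy k π ν hopt => hxy k π ν hopt.1 hopt.2.1⟩⟩
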